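/- The polynomial p(R) = R⁶ + R⁵ − 4R⁴ − 8R³ − 10R² − 6R − 2 has exactly one positive real root R₃, and this root satisfies 2.55 < R₃ < 2.56. -/

import Mathlib

/-!
The coefficients `1, 1, -4, -8, -10, -6, -2` change sign exactly once, so Descartes' rule of signs
allows at most one positive root. The polynomial is negative at `2.55` and positive at `2.56`, so
the intermediate value theorem puts a root between them.
-/

open Polynomial

theorem eq_of_isRoot_of_pos_of_signVariations_le_one {R : Type*} [CommRing R] [LinearOrder R]
    [IsStrictOrderedRing R] {P : R[X]} (hP : P ≠ 0) (hsign : P.signVariations ≤ 1) {x y : R}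
    (hx : 0 < x) (hy : 0 < y) (hPx : P.IsRoot x) (hPy : P.IsRoot y) : x = y := by
  have hcard : (P.roots.filter (0 < ·)).toFinset.card ≤ 1 := calc
    _ ≤ (P.roots.filter (0 < ·)).card := Multiset.toFinset_card_le _
    _ = P.roots.countP (0 < ·) := (Multiset.countP_eq_card_filter ..).symm
    _ ≤ P.signVariations := P.roots_countP_pos_le_signVariations
    _ ≤ 1 := hsign
  have hmem {z : R} (hz : 0 < z) (hPz : P.IsRoot z) :
      z ∈ (P.roots.filter (0 < ·)).toFinset := by
    simp [hP, hz, hPz.eq_zero]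
  exact Finset.card_le_one.mp hcard x (hmem hx hPx) y (hmem hy hPy)

/-- The sextic whose unique positive root is `R₃`, as a formal polynomial so that its sign
variations can be counted. -/
noncomputable def r3Polynomial : ℝ[X] :=
  X ^ 6 + X ^ 5 - 4 * X ^ 4 - 8 * X ^ 3 - 10 * X ^ 2 - 6 * X - 2

theorem isRoot_r3Polynomial_iff {x : ℝ} : r3Polynomial.IsRoot x ↔
    x ^ 6 + x ^ 5 - 4 * x ^ 4 - 8 * x ^ 3 - 10 * x ^ 2 - 6 * x - 2 = 0 := by
  simp [r3Polynomial]

theorem degree_r3Polynomial : r3Polynomial.degree = 6 := by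
  unfold r3Polynomial
  compute_degree!

theorem r3Polynomial_ne_zero : r3Polynomial ≠ 0 := fun h ↦ by
  simpa [h] using degree_r3Polynomial

theorem coeffList_r3Polynomial : r3Polynomial.coeffList = [1, 1, -4, -8, -10, -6, -2] := by
  have hrange : (List.range r3Polynomial.degree.succ).reverse = [6, 5, 4, 3, 2, 1, 0] := by
    rw [degree_r3Polynomial]
    rfl
  rw [coeffList, hrange]
  simp [r3Polynomial, coeff_X, coeff_X_pow, coeff_ofNat_mul]

theorem signVariations_r3Polynomial : r3Polynomial.signVariations = 1 := by
  simp [signVariations, coeffList_r3Polynomial, List.destutter]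

theorem exists_isRoot_r3Polynomial_mem_Ioo :
    ∃ r ∈ Set.Ioo (2.55 : ℝ) 2.56, r3Polynomial.IsRoot r := by
  have hneg : r3Polynomial.eval 2.55 < 0 := by norm_num [r3Polynomial]
  have hpos : 0 < r3Polynomial.eval 2.56 := by norm_num [r3Polynomial]
  exact intermediate_value_Ioo (by norm_num) r3Polynomial.continuousOn ⟨hneg, hpos⟩

/-- The polynomial `R⁶ + R⁵ - 4R⁴ - 8R³ - 10R² - 6R - 2` has exactly one positive real
root `R₃`, and `2.55 < R₃ < 2.56`. -/
theorem R3_unique_positive_root :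
    ∃ R3 : ℝ, (0 < R3 ∧ R3^6 + R3^5 - 4*R3^4 - 8*R3^3 - 10*R3^2 - 6*R3 - 2 = 0) ∧
      (∀ x : ℝ, 0 < x → x^6 + x^5 - 4*x^4 - 8*x^3 - 10*x^2 - 6*x - 2 = 0 → x = R3) ∧
      2.55 < R3 ∧ R3 < 2.56 := by
  simp only [← isRoot_r3Polynomial_iff]
  obtain ⟨r, ⟨hlower, hupper⟩, hroot⟩ := exists_isRoot_r3Polynomial_mem_Ioo
  have hpos : 0 < r := lt_trans (by norm_num) hlower
  refine ⟨r, ⟨hpos, hroot⟩, fun x hx hxroot ↦ ?_, hlower, hupper⟩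
  exact eq_of_isRoot_of_pos_of_signVariations_le_one r3Polynomial_ne_zero
    signVariations_r3Polynomial.le hx hpos hxroot hroot
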